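/- arXiv:1805.05739 — 3 statements merged into one kernel-verified Lean document; each statement's English description precedes it below -/
import Mathlib

section
/- Let ε > 0, g: ℝ^n → ℝ^n be real analytic in a neighborhood of 0, and let f ∈ C^∞((−ε,ε), ℝ^n) solve the ODE f'(x) = g(f(x)) for x ∈ (−ε,ε) with f(0) = 0. Then f is real analytic in a neighborhood of 0. -/
open scoped Topology

open Set Filter

noncomputable section

section Superposition

variable {K E F : Type*} [TopologicalSpace K] [CompactSpace K]
  [NormedAddCommGroup E] [NormedSpace ℝ E] [NormedAddCommGroup F] [NormedSpace ℝ F]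

/-- The continuous multilinear map on spaces of continuous functions which applies a given
continuous multilinear map pointwise. -/
def ContinuousMultilinearMap.pointwise {ι : Type*} [Fintype ι]
    (m : ContinuousMultilinearMap ℝ (fun _ : ι => E) F) :
    ContinuousMultilinearMap ℝ (fun _ : ι => C(K, E)) C(K, F) :=
  MultilinearMap.mkContinuous
    { toFun := fun u => ⟨fun t => m fun i => u i t, by fun_prop⟩
      map_update_add' := by
        intro _ u i x y
        ext t
        have h (z : C(K, E)) : (fun j => Function.update u i z j t) =
            Function.update (fun j => u j t) i (z t) := by
          ext j
          rcases eq_or_ne j i with rfl | hj <;> simp [*]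
        simp [h]
      map_update_smul' := by
        intro _ u i c x
        ext t
        have h (z : C(K, E)) : (fun j => Function.update u i z j t) =
            Function.update (fun j => u j t) i (z t) := by
          ext j
          rcases eq_or_ne j i with rfl | hj <;> simp [*]
        simp [h] }
    ‖m‖ fun u => by
      rw [ContinuousMap.norm_le _ (by positivity)]
      intro t
      refine (m.le_opNorm _).trans ?_
      gcongr with i
      exact (u i).norm_coe_le_norm t

theorem ContinuousMultilinearMap.norm_pointwise_le {ι : Type*} [Fintype ι]
    (m : ContinuousMultilinearMap ℝ (fun _ : ι => E) F) :
    ‖(m.pointwise : ContinuousMultilinearMap ℝ (fun _ : ι => C(K, E)) C(K, F))‖ ≤ ‖m‖ :=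
  MultilinearMap.mkContinuous_norm_le _ (norm_nonneg _) _

/-- The superposition operator of an analytic map is analytic near `0` on the space of continuous
functions. -/
theorem AnalyticAt.exists_superposition [CompleteSpace F] {g : E → F} (hg : AnalyticAt ℝ g 0) :
    ∃ N : C(K, E) → C(K, F), AnalyticAt ℝ N 0 ∧ ∀ᶠ u in 𝓝 0, ∀ t, N u t = g (u t) := by
  obtain ⟨p, r, hp⟩ := hg
  let P : FormalMultilinearSeries ℝ C(K, E) C(K, F) := fun n => (p n).pointwise
  have hr : r ≤ P.radius := hp.r_le.trans
    (FormalMultilinearSeries.radius_le_of_le fun n => (p n).norm_pointwise_le)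
  have hP := P.hasFPowerSeriesOnBall (hp.r_pos.trans_le hr)
  refine ⟨P.sum, hP.analyticAt, ?_⟩
  filter_upwards [Metric.eball_mem_nhds (0 : C(K, E)) hp.r_pos] with u hu t
  have hut : u t ∈ Metric.eball (0 : E) r := by
    simp only [Metric.mem_eball, edist_zero_right] at hu ⊢
    exact lt_of_le_of_lt (enorm_le_iff_norm_le.2 (u.norm_coe_le_norm t)) hu
  have h₁ := (hP.hasSum (Metric.eball_subset_eball hr hu)).mapL (ContinuousMap.evalCLM ℝ t)
  have h₂ := hp.hasSum hut
  simp only [zero_add] at h₁ h₂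
  exact h₁.unique h₂

end Superposition

section ODE

open scoped unitInterval

variable {E : Type*} [NormedAddCommGroup E]

theorem continuous_extend_unitInterval (u : C(I, E)) :
    Continuous fun s : ℝ => u (projIcc 0 1 zero_le_one s) :=
  u.continuous.comp continuous_projIcc

variable [NormedSpace ℝ E]

/-- The Volterra operator `u ↦ (t ↦ ∫ s in 0..t, u s)` on continuous functions on `[0, 1]`. -/
def volterraCLM : C(I, E) →L[ℝ] C(I, E) :=
  LinearMap.mkContinuous
    { toFun := fun u => ⟨fun t => ∫ s in (0 : ℝ)..t, u (projIcc 0 1 zero_le_one s),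
        (intervalIntegral.continuous_primitive
          (fun _ _ => (continuous_extend_unitInterval u).intervalIntegrable _ _) 0).comp
          continuous_subtype_val⟩
      map_add' := fun u v => by
        ext t
        exact intervalIntegral.integral_add
          ((continuous_extend_unitInterval u).intervalIntegrable _ _)
          ((continuous_extend_unitInterval v).intervalIntegrable _ _)
      map_smul' := fun c u => by
        ext t
        exact intervalIntegral.integral_smul c _ }
    1 fun u => by
      rw [ContinuousMap.norm_le _ (by positivity)]
      intro t
      refine (intervalIntegral.norm_integral_le_of_norm_le_const
        fun s _ => u.norm_coe_le_norm _).trans ?_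
      rw [sub_zero, abs_of_nonneg t.2.1, mul_comm]
      gcongr
      exact t.2.2

/-- If `N` is analytic at `0`, a small solution `u` of the equation `u = c • N u` depends
analytically on the scalar `c` near `0`. -/
theorem analyticAt_of_eventually_eq_smul {X : Type*} [NormedAddCommGroup X] [NormedSpace ℝ X]
    [CompleteSpace X] {N : X → X} (hN : AnalyticAt ℝ N 0) {u : ℝ → X} (hu : ContinuousAt u 0)
    (hu0 : u 0 = 0) (h : ∀ᶠ c in 𝓝 0, u c = c • N (u c)) : AnalyticAt ℝ u 0 := by
  let Ψ : ℝ × X → ℝ × X := fun q => (q.1, q.2 - q.1 • N q.2)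
  have hN' : AnalyticAt ℝ (fun q : ℝ × X => N q.2) 0 :=
    AnalyticAt.comp (g := N) (f := Prod.snd) (x := (0 : ℝ × X)) hN analyticAt_snd
  have hΨ : ContDiffAt ℝ ⊤ Ψ 0 :=
    (analyticAt_fst.prod (analyticAt_snd.sub (analyticAt_fst.smul hN'))).contDiffAt
  let e : (ℝ × X) ≃L[ℝ] (ℝ × X) :=
    (ContinuousLinearEquiv.refl ℝ ℝ).skewProd (ContinuousLinearEquiv.refl ℝ X)
      (-ContinuousLinearMap.toSpanSingleton ℝ (N 0))
  have he : HasFDerivAt Ψ (e : ℝ × X →L[ℝ] ℝ × X) 0 := by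
    have h' := (hasFDerivAt_fst (𝕜 := ℝ) (p := (0 : ℝ × X))).prodMk
      ((hasFDerivAt_snd (𝕜 := ℝ) (p := (0 : ℝ × X))).sub
        ((hasFDerivAt_fst (𝕜 := ℝ) (p := (0 : ℝ × X))).smul
          hN'.differentiableAt.hasFDerivAt))
    refine h'.congr_fderiv ?_
    ext <;> simp [e]
  have hinv := (hΨ.to_localInverse he (by simp)).analyticAt
  have hleft := (hΨ.hasStrictFDerivAt' he (by simp)).eventually_left_inverse
  have hΨ0 : Ψ 0 = (0, 0) := by simp [Ψ]
  rw [hΨ0] at hinv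
  have hmk : AnalyticAt ℝ (fun c : ℝ => (c, (0 : X))) 0 := analyticAt_id.prod analyticAt_const
  refine (analyticAt_snd.comp (AnalyticAt.comp (x := (0 : ℝ)) hinv hmk)).congr ?_
  have hcu : Tendsto (fun c => (c, u c)) (𝓝 0) (𝓝 (0 : ℝ × X)) := by
    have := continuousAt_id.prodMk hu
    simpa [ContinuousAt, hu0, ← Prod.zero_eq_mk] using this
  filter_upwards [hcu.eventually hleft, h] with c hc hc'
  have hΨc : Ψ (c, u c) = (c, 0) := by simp [Ψ, ← hc']
  rw [hΨc] at hc
  exact congrArg Prod.snd hc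

/-- Integral curves of analytic vector fields are analytic. -/
theorem AnalyticAt.of_hasDerivAt_comp [CompleteSpace E] {g : E → E} (hg : AnalyticAt ℝ g 0)
    {f : ℝ → E} (hf : ∀ᶠ x in 𝓝 0, HasDerivAt f (g (f x)) x) (hf0 : f 0 = 0) :
    AnalyticAt ℝ f 0 := by
  obtain ⟨N, hN, hNg⟩ := hg.exists_superposition (K := I)
  obtain ⟨δ, hδ, hfδ⟩ := Metric.nhds_basis_closedBall.eventually_iff.1 hf
  have hδ' : -δ ≤ δ := by linarith
  have hmem {x : ℝ} (hx : x ∈ Icc (-δ) δ) : HasDerivAt f (g (f x)) x :=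
    hfδ (by rwa [Real.closedBall_eq_Icc, zero_sub, zero_add])
  have hcont : ContinuousOn f (Icc (-δ) δ) := HasDerivAt.continuousOn fun x hx => hmem hx
  let w : C(ℝ × I, E) := ⟨fun q => IccExtend hδ' ((Icc (-δ) δ).domRestrict f) (q.1 * q.2),
    hcont.domRestrict.Icc_extend'.comp (by fun_prop)⟩
  let u : C(ℝ, C(I, E)) := w.curry
  have hu {c s : ℝ} (hc : c ∈ Icc (-δ) δ) (hs : s ∈ I) :
      c * s ∈ Icc (-δ) δ ∧ u c ⟨s, hs⟩ = f (c * s) := by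
    have hcs : c * s ∈ Icc (-δ) δ := by
      rw [mem_Icc, ← abs_le] at hc ⊢
      rw [abs_mul, abs_of_nonneg hs.1]
      exact (mul_le_of_le_one_right (abs_nonneg c) hs.2).trans hc
    exact ⟨hcs, IccExtend_of_mem hδ' ((Icc (-δ) δ).domRestrict f) hcs⟩
  have hδ0 : ∀ᶠ c in 𝓝 (0 : ℝ), c ∈ Icc (-δ) δ := Icc_mem_nhds (by linarith) hδ
  have hu0 : u 0 = 0 := by
    ext t
    simpa [hf0] using (hu (c := 0) ⟨by linarith, hδ.le⟩ t.2).2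
  have hNu : ∀ᶠ c in 𝓝 0, ∀ t, N (u c) t = g (u c t) := by
    refine Tendsto.eventually ?_ hNg
    simpa [hu0] using u.continuous.tendsto 0
  have hana : AnalyticAt ℝ u 0 := by
    refine analyticAt_of_eventually_eq_smul (volterraCLM.analyticAt _ |>.comp hN)
      u.continuous.continuousAt hu0 ?_
    filter_upwards [hδ0, hNu] with c hc hNc
    ext t
    have hderiv : ∀ s ∈ uIcc (0 : ℝ) t, HasDerivAt (fun s => f (c * s))
        (c • N (u c) (projIcc 0 1 zero_le_one s)) s := by
      intro s hs
      rw [uIcc_of_le t.2.1] at hs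
      have hsI : s ∈ I := ⟨hs.1, hs.2.trans t.2.2⟩
      rw [projIcc_of_mem _ hsI, hNc, (hu hc hsI).2]
      have := (hmem (hu hc hsI).1).scomp s ((hasDerivAt_id s).const_mul c)
      simpa [Function.comp_def] using this
    have hint := intervalIntegral.integral_eq_sub_of_hasDerivAt hderiv
      (((continuous_extend_unitInterval (N (u c))).const_smul c).intervalIntegrable _ _)
    rw [intervalIntegral.integral_smul, mul_zero, hf0, sub_zero] at hint
    rw [(hu hc t.2).2, ← hint]
    rfl
  have heval := ((ContinuousMap.evalCLM ℝ (1 : I)).analyticAt (u 0)).comp hana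
  refine heval.congr ?_
  filter_upwards [hδ0] with c hc
  simpa using (hu hc (s := 1) unitInterval.one_mem).2

end ODE

end

/-- Cauchy–Kovalevskaya, ODE case: a smooth solution on `(-ε, ε)` of `f' = g(f)`, `f(0)=0`,
with `g` real analytic near `0`, is real analytic near `0`. -/
theorem stmt5 {n : ℕ} (ε : ℝ) (hε : 0 < ε)
    (g : EuclideanSpace ℝ (Fin n) → EuclideanSpace ℝ (Fin n))
    (U : Set (EuclideanSpace ℝ (Fin n))) (hU : U ∈ 𝓝 (0 : EuclideanSpace ℝ (Fin n)))
    (hg : AnalyticOnNhd ℝ g U)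
    (f : ℝ → EuclideanSpace ℝ (Fin n))
    (hf : ContDiffOn ℝ (⊤ : ℕ∞) f (Set.Ioo (-ε) ε))
    (hode : ∀ x ∈ Set.Ioo (-ε) ε, HasDerivAt f (g (f x)) x)
    (hf0 : f 0 = 0) :
    AnalyticAt ℝ f 0 :=
  (hg 0 (mem_of_mem_nhds hU)).of_hasDerivAt_comp
    (mem_of_superset (Ioo_mem_nhds (neg_lt_zero.2 hε) hε) hode) hf0
end

section
/- Let m > 1/2 and 0 < ε ≤ 1/2. There exists a constant C_H < ∞ independent of ε, s₁, s₂ such that for all s₁, s₂ ∈ [0,1] and all smooth f, g: ℝ/ℤ → ℝ, ‖H^ε_{s₁,s₂}(f,g)‖_{H^m} ≤ C_H ‖f‖_{H^m} ‖g‖_{H^m}, where H^ε_{s₁,s₂}(f,g)(x) = ∫_{ε ≤ |w| ≤ 1/2} f(x+s₁w) g(x+s₂w)/w dw. -/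
open scoped Real

/-- The `k`-th Fourier coefficient of a (1-periodic) function `h : ℝ → ℝ`. -/
noncomputable def fourierCoeffR (h : ℝ → ℝ) (k : ℤ) : ℂ :=
  ∫ x in (0:ℝ)..1, (h x : ℂ) * Complex.exp (-2 * π * Complex.I * k * x)

/-- The `Hᵐ(ℝ/ℤ)` norm via Fourier coefficients. -/
noncomputable def sobNorm (m : ℝ) (h : ℝ → ℝ) : ℝ :=
  Real.sqrt (∑' k : ℤ, (1 + (k:ℝ)^2) ^ m * ‖fourierCoeffR h k‖^2)

/-- Truncations of the sine integral are uniformly bounded. -/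
lemma abs_integral_sin_div_le {x y : ℝ} (hx : 0 < x) (hxy : x ≤ y) :
    |∫ t in x..y, Real.sin t / t| ≤ 3 := by
  have near : ∀ {a b : ℝ}, 0 < a → a ≤ b → b ≤ 1 → |∫ t in a..b, Real.sin t / t| ≤ 1 := by
    intro a b ha hab hb
    have h := intervalIntegral.norm_integral_le_of_norm_le_const (a := a) (b := b) (C := 1)
      (f := fun t => Real.sin t / t) (by
        intro t ht
        rw [Set.uIoc_of_le hab] at ht
        have ht0 : 0 < t := ha.trans ht.1
        rw [Real.norm_eq_abs, abs_div, abs_of_pos ht0, div_le_one ht0]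
        simpa [abs_of_pos ht0] using Real.abs_sin_le_abs (x := t))
    rw [Real.norm_eq_abs, abs_of_nonneg (sub_nonneg.2 hab)] at h
    linarith
  have far : ∀ {a b : ℝ}, 1 ≤ a → a ≤ b → |∫ t in a..b, Real.sin t / t| ≤ 2 := by
    intro a b ha hab
    have pos : ∀ t ∈ Set.uIcc a b, 0 < t := fun t ht => by
      rw [Set.uIcc_of_le hab] at ht; linarith [ht.1]
    have hcont : ContinuousOn (fun t : ℝ => -(t ^ 2)⁻¹) (Set.uIcc a b) :=
      ((continuousOn_id.pow 2).inv₀ fun t ht => by simpa using (pos t ht).ne').neg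
    have key := intervalIntegral.integral_mul_deriv_eq_deriv_mul (a := a) (b := b)
      (u := fun t : ℝ => t⁻¹) (v := fun t => -Real.cos t) (u' := fun t => -(t ^ 2)⁻¹)
      (v' := Real.sin) (fun t ht => hasDerivAt_inv (pos t ht).ne')
      (fun t _ => (Real.hasDerivAt_cos t).neg.congr_deriv (neg_neg _))
      hcont.intervalIntegrable (Real.continuous_sin.intervalIntegrable _ _)
    have hrem : |∫ t in a..b, -(t ^ 2)⁻¹ * -Real.cos t| ≤ a⁻¹ - b⁻¹ := by
      have hint : ∫ t in a..b, (t ^ 2)⁻¹ = a⁻¹ - b⁻¹ := by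
        have h := intervalIntegral.integral_eq_sub_of_hasDerivAt (a := a) (b := b)
          (f := fun t : ℝ => t⁻¹) (fun t ht => hasDerivAt_inv (pos t ht).ne')
          hcont.intervalIntegrable
        rw [intervalIntegral.integral_neg] at h
        linarith
      rw [← hint, ← Real.norm_eq_abs]
      refine intervalIntegral.norm_integral_le_of_norm_le hab (.of_forall fun t _ => ?_) ?_
      · rw [neg_mul_neg, norm_mul, Real.norm_of_nonneg (by positivity)]
        exact mul_le_of_le_one_right (by positivity) (Real.abs_cos_le_one t)
      · exact (hcont.neg.congr fun t _ => (neg_neg _).symm).intervalIntegrable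
    have hdiv : ∫ t in a..b, Real.sin t / t = ∫ t in a..b, t⁻¹ * Real.sin t :=
      intervalIntegral.integral_congr fun t _ => by simp [div_eq_inv_mul]
    have ha' : a⁻¹ ≤ 1 := inv_le_one_of_one_le₀ ha
    have hbound : ∀ c : ℝ, 0 < c → |c⁻¹ * -Real.cos c| ≤ c⁻¹ := fun c hc => by
      rw [abs_mul, abs_neg, abs_of_pos (inv_pos.2 hc)]
      exact mul_le_of_le_one_right (by positivity) (Real.abs_cos_le_one c)
    have h1 := abs_le.1 (hbound a (by linarith))
    have h2 := abs_le.1 (hbound b (by linarith))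
    have h3 := abs_le.1 hrem
    rw [hdiv, key, abs_le]
    constructor <;> linarith [h1.1, h1.2, h2.1, h2.2, h3.1, h3.2]
  rcases le_total y 1 with hy | hy
  · linarith [near hx hxy hy]
  rcases le_total 1 x with hx1 | hx1
  · linarith [far hx1 hxy]
  have hint : ∀ {a b : ℝ}, 0 < a → a ≤ b →
      IntervalIntegrable (fun t => Real.sin t / t) MeasureTheory.volume a b := by
    intro a b ha hab
    refine (Real.continuous_sin.continuousOn.div continuousOn_id fun t ht => ?_).intervalIntegrable
    rw [Set.uIcc_of_le hab] at ht
    exact (ha.trans_le ht.1).ne'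
  rw [← intervalIntegral.integral_add_adjacent_intervals (hint hx hx1) (hint one_pos hy)]
  exact (abs_add_le _ _).trans (by linarith [near hx hx1 le_rfl, far le_rfl hy])

/-- The truncated Fourier transform of `1 / w` is uniformly bounded in frequency and cutoff. -/
lemma abs_integral_sin_mul_div_le (c : ℝ) {a b : ℝ} (ha : 0 < a) (hab : a ≤ b) :
    |∫ w in a..b, Real.sin (c * w) / w| ≤ 3 := by
  have hpos : ∀ c : ℝ, 0 < c → |∫ w in a..b, Real.sin (c * w) / w| ≤ 3 := by
    intro c hc
    have h := intervalIntegral.integral_comp_mul_left (a := a) (b := b)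
      (fun t => Real.sin t / t) hc.ne'
    have hsub : ∫ w in a..b, Real.sin (c * w) / w = ∫ t in c * a..c * b, Real.sin t / t := by
      rw [← smul_inv_smul₀ hc.ne' (∫ t in c * a..c * b, Real.sin t / t), ← h,
        ← intervalIntegral.integral_smul]
      refine intervalIntegral.integral_congr fun w _ => ?_
      simp only [smul_eq_mul]
      rw [← mul_div_assoc, mul_div_mul_left _ _ hc.ne']
    rw [hsub]
    exact abs_integral_sin_div_le (by positivity) (by gcongr)
  rcases lt_trichotomy c 0 with hc | rfl | hc
  · have h := hpos (-c) (by linarith)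
    simpa [neg_div, Real.sin_neg] using h
  · simp
  · exact hpos c hc

lemma fourierCoeffR_deriv {f : ℝ → ℝ} (hp : Function.Periodic f 1) (hf : ContDiff ℝ 1 f) (k : ℤ) :
    fourierCoeffR (deriv f) k = 2 * π * Complex.I * k * fourierCoeffR f k := by
  have hd : ∀ x, HasDerivAt f (deriv f x) x := fun x =>
    (hf.differentiable one_ne_zero x).hasDerivAt
  have hexp : ∀ x : ℝ, HasDerivAt (fun x : ℝ => Complex.exp (-2 * π * Complex.I * k * x))
      (Complex.exp (-2 * π * Complex.I * k * x) * (-2 * π * Complex.I * k)) x := fun x => by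
    simpa using ((hasDerivAt_id x).ofReal_comp.const_mul (-2 * π * Complex.I * k)).cexp
  have hcont : Continuous fun x : ℝ => Complex.exp (-2 * π * Complex.I * k * x) := by fun_prop
  have hder : Continuous (deriv f) := hf.continuous_deriv le_rfl
  have key := intervalIntegral.integral_mul_deriv_eq_deriv_mul (a := 0) (b := 1)
    (u := fun x : ℝ => Complex.exp (-2 * π * Complex.I * k * x)) (v := fun x => (f x : ℂ))
    (v' := fun x => ((deriv f x : ℝ) : ℂ)) (fun x _ => hexp x) (fun x _ => (hd x).ofReal_comp)
    (by apply Continuous.intervalIntegrable; fun_prop)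
    (by apply Continuous.intervalIntegrable; fun_prop)
  have hk : Complex.exp (-(2 * π * Complex.I * k)) = 1 := by
    rw [Complex.exp_eq_one_iff]
    exact ⟨-k, by push_cast; ring⟩
  have hf1 : f 1 = f 0 := by simpa using hp 0
  have hzero : Complex.exp (-2 * π * Complex.I * k * (1 : ℝ)) * (f 1 : ℂ) -
      Complex.exp (-2 * π * Complex.I * k * (0 : ℝ)) * (f 0 : ℂ) = 0 := by simp [hk, hf1]
  rw [hzero, zero_sub, ← intervalIntegral.integral_neg] at key
  unfold fourierCoeffR
  rw [← intervalIntegral.integral_const_mul]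
  calc _ = ∫ x in (0 : ℝ)..1, Complex.exp (-2 * π * Complex.I * k * x) * ((deriv f x : ℝ) : ℂ) :=
        intervalIntegral.integral_congr fun x _ => mul_comm _ _
    _ = _ := key.trans (intervalIntegral.integral_congr fun x _ => by ring)

lemma norm_fourierCoeffR_le {f : ℝ → ℝ} (hf : Continuous f) :
    ∃ C, ∀ k, ‖fourierCoeffR f k‖ ≤ C := by
  refine ⟨∫ x in (0 : ℝ)..1, |f x|, fun k => ?_⟩
  refine intervalIntegral.norm_integral_le_of_norm_le zero_le_one (.of_forall fun x _ => ?_)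
    (hf.abs.intervalIntegrable _ _)
  have he : ‖Complex.exp (-2 * π * Complex.I * k * x)‖ = 1 := by
    rw [show -2 * π * Complex.I * k * x = ((-2 * π * k * x : ℝ) : ℂ) * Complex.I by push_cast; ring]
    exact Complex.norm_exp_ofReal_mul_I _
  rw [norm_mul, he, mul_one, Complex.norm_real, Real.norm_eq_abs]

/-- Fourier coefficients of a smooth periodic function decay faster than any power. -/
lemma abs_pow_mul_norm_fourierCoeffR_le {f : ℝ → ℝ} (hp : Function.Periodic f 1)
    (hf : ContDiff ℝ (⊤ : ℕ∞) f) (n : ℕ) :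
    ∃ C, ∀ k : ℤ, |(k : ℝ)| ^ n * ‖fourierCoeffR f k‖ ≤ C := by
  induction n generalizing f with
  | zero => simpa using norm_fourierCoeffR_le hf.continuous
  | succ n ih =>
    have hf' : ContDiff ℝ (⊤ : ℕ∞) (deriv f) := (contDiff_infty_iff_deriv.1 hf).2
    have hp' : Function.Periodic (deriv f) 1 := fun x => by
      rw [← deriv_comp_add_const, show (fun y => f (y + 1)) = f from funext hp]
    obtain ⟨C, hC⟩ := ih hp' hf'
    refine ⟨C, fun k => le_trans ?_ (hC k)⟩
    rw [fourierCoeffR_deriv hp (hf.of_le (by exact_mod_cast le_top)), norm_mul, pow_succ, mul_assoc]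
    gcongr
    simp only [norm_mul, Complex.norm_I, Complex.norm_intCast, Complex.norm_real, Complex.norm_ofNat,
      Real.norm_eq_abs, abs_of_pos Real.pi_pos]
    nlinarith [abs_nonneg (k : ℝ), Real.pi_gt_three]

lemma one_add_sq_pow_mul_norm_fourierCoeffR_le {f : ℝ → ℝ} (hp : Function.Periodic f 1)
    (hf : ContDiff ℝ (⊤ : ℕ∞) f) (n : ℕ) :
    ∃ C, ∀ k : ℤ, (1 + (k : ℝ) ^ 2) ^ n * ‖fourierCoeffR f k‖ ≤ C := by
  obtain ⟨A, hA⟩ := abs_pow_mul_norm_fourierCoeffR_le hp hf 0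
  obtain ⟨B, hB⟩ := abs_pow_mul_norm_fourierCoeffR_le hp hf (2 * n)
  refine ⟨2 ^ (n - 1) * (A + B), fun k => ?_⟩
  have h : (1 + (k : ℝ) ^ 2) ^ n ≤ 2 ^ (n - 1) * (1 ^ n + ((k : ℝ) ^ 2) ^ n) :=
    add_pow_le zero_le_one (sq_nonneg _) n
  have hA := hA k
  have hB := hB k
  rw [pow_mul, sq_abs] at hB
  calc _ ≤ 2 ^ (n - 1) * (1 ^ n + ((k : ℝ) ^ 2) ^ n) * ‖fourierCoeffR f k‖ := by gcongr
    _ = 2 ^ (n - 1) * (|(k : ℝ)| ^ 0 * ‖fourierCoeffR f k‖ +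
        ((k : ℝ) ^ 2) ^ n * ‖fourierCoeffR f k‖) := by simp; ring
    _ ≤ _ := by gcongr

lemma summable_one_add_sq_rpow_neg {m : ℝ} (hm : 1 / 2 < m) :
    Summable fun k : ℤ => (1 + (k : ℝ) ^ 2) ^ (-m) := by
  refine Summable.of_norm_bounded_eventually (Real.summable_abs_int_rpow (b := 2 * m) (by linarith)) ?_
  filter_upwards [(Set.finite_singleton (0 : ℤ)).compl_mem_cofinite] with k hk
  have hk : 0 < |(k : ℝ)| := abs_pos.2 (by exact_mod_cast hk)
  rw [Real.norm_of_nonneg (by positivity), show -(2 * m) = 2 * -m by ring, Real.rpow_mul hk.le]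
  refine Real.rpow_le_rpow_of_nonpos (by positivity) ?_ (by linarith)
  norm_num

lemma summable_norm_fourierCoeffR {f : ℝ → ℝ} (hp : Function.Periodic f 1)
    (hf : ContDiff ℝ (⊤ : ℕ∞) f) : Summable fun k => ‖fourierCoeffR f k‖ := by
  obtain ⟨C, hC⟩ := one_add_sq_pow_mul_norm_fourierCoeffR_le hp hf 1
  refine .of_nonneg_of_le (fun _ => norm_nonneg _) (fun k => ?_)
    ((summable_one_add_sq_rpow_neg (m := 1) (by norm_num)).mul_right C)
  rw [Real.rpow_neg_one, ← div_eq_inv_mul, le_div_iff₀' (by positivity)]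
  simpa using hC k

lemma summable_sobolev_fourierCoeffR (m : ℝ) {f : ℝ → ℝ} (hp : Function.Periodic f 1)
    (hf : ContDiff ℝ (⊤ : ℕ∞) f) :
    Summable fun k : ℤ => (1 + (k : ℝ) ^ 2) ^ m * ‖fourierCoeffR f k‖ ^ 2 := by
  obtain ⟨n, hn⟩ := exists_nat_ge (m + 1)
  obtain ⟨C, hC⟩ := one_add_sq_pow_mul_norm_fourierCoeffR_le hp hf n
  refine .of_nonneg_of_le (fun _ => by positivity) (fun k => ?_)
    ((summable_one_add_sq_rpow_neg (m := 1) (by norm_num)).mul_right (C ^ 2))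
  have hk : (1 : ℝ) ≤ 1 + (k : ℝ) ^ 2 := by nlinarith [sq_nonneg (k : ℝ)]
  have hle : (1 + (k : ℝ) ^ 2) ^ m ≤ (1 + (k : ℝ) ^ 2) ^ (-1 : ℝ) * ((1 + (k : ℝ) ^ 2) ^ n) ^ 2 := by
    rw [← pow_mul, ← Real.rpow_natCast _ (n * 2), ← Real.rpow_add (by positivity)]
    refine Real.rpow_le_rpow_of_exponent_le hk ?_
    have : (0 : ℝ) ≤ n := n.cast_nonneg
    push_cast
    linarith
  calc _ ≤ (1 + (k : ℝ) ^ 2) ^ (-1 : ℝ) * ((1 + (k : ℝ) ^ 2) ^ n) ^ 2 * ‖fourierCoeffR f k‖ ^ 2 := by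
        gcongr
    _ = (1 + (k : ℝ) ^ 2) ^ (-1 : ℝ) * ((1 + (k : ℝ) ^ 2) ^ n * ‖fourierCoeffR f k‖) ^ 2 := by ring
    _ ≤ _ := by gcongr; exact hC k

lemma hasSum_fourierCoeffR {f : ℝ → ℝ} (hp : Function.Periodic f 1)
    (hf : ContDiff ℝ (⊤ : ℕ∞) f) (x : ℝ) :
    HasSum (fun k : ℤ => fourierCoeffR f k * Complex.exp (2 * π * Complex.I * k * x)) (f x) := by
  have hpc : Function.Periodic (fun x => (f x : ℂ)) 1 := fun x => by simp [hp x]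
  let F : C(AddCircle (1 : ℝ), ℂ) := ⟨hpc.lift, continuous_quot_lift _ (by
    have := hf.continuous; fun_prop)⟩
  have hF : ∀ k, fourierCoeff F k = fourierCoeffR f k := fun k => by
    rw [fourierCoeff_eq_intervalIntegral _ _ 0, fourierCoeffR]
    simp only [div_one, one_smul, zero_add]
    refine intervalIntegral.integral_congr fun x _ => ?_
    simp only [fourier_coe_apply, smul_eq_mul]
    rw [mul_comm]
    congr 2
    push_cast
    ring
  have h := has_pointwise_sum_fourier_series_of_summable (f := F)
    (by rw [funext hF]; exact (summable_norm_fourierCoeffR hp hf).of_norm) (x : AddCircle (1 : ℝ))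
  simp only [hF, fourier_coe_apply, smul_eq_mul, Complex.ofReal_one, div_one] at h
  exact h

lemma integral_exp_two_pi_I_int_mul (n : ℤ) :
    ∫ x in (0 : ℝ)..1, Complex.exp (2 * π * Complex.I * n * x) = if n = 0 then 1 else 0 := by
  split_ifs with hn
  · simp [hn]
  · have hc : 2 * π * Complex.I * n ≠ 0 := by
      simp [Real.pi_ne_zero, hn]
    have h1 : Complex.exp (2 * π * Complex.I * n) = 1 :=
      Complex.exp_eq_one_iff.2 ⟨n, by ring⟩
    rw [integral_exp_mul_complex hc]
    simp [h1]

lemma norm_exp_two_pi_I_int_mul (n : ℤ) (x : ℝ) :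
    ‖Complex.exp (2 * π * Complex.I * n * x)‖ = 1 := by
  rw [show 2 * π * Complex.I * n * x = ((2 * π * n * x : ℝ) : ℂ) * Complex.I by push_cast; ring]
  exact Complex.norm_exp_ofReal_mul_I _

/-- Fourier coefficients of an absolutely convergent trigonometric series with repeated
frequencies. -/
lemma hasSum_fourierCoeffR_of_hasSum {ι : Type*} [Countable ι] {c : ι → ℂ} {n : ι → ℤ}
    {h : ℝ → ℝ} (hc : Summable fun p => ‖c p‖)
    (hh : ∀ x : ℝ, HasSum (fun p => c p * Complex.exp (2 * π * Complex.I * n p * x)) (h x))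
    (k : ℤ) : HasSum (fun p => if n p = k then c p else 0) (fourierCoeffR h k) := by
  have hexp : ∀ (p : ι) (x : ℝ), Complex.exp (2 * π * Complex.I * n p * x) *
      Complex.exp (-2 * π * Complex.I * k * x) =
      Complex.exp (2 * π * Complex.I * (n p - k : ℤ) * x) := fun p x => by
    rw [← Complex.exp_add]
    congr 1
    push_cast
    ring
  have key := intervalIntegral.hasSum_integral_of_dominated_convergence (a := 0) (b := 1)
    (μ := MeasureTheory.volume)
    (F := fun p (x : ℝ) => c p * Complex.exp (2 * π * Complex.I * (n p - k : ℤ) * x))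
    (f := fun x => (h x : ℂ) * Complex.exp (-2 * π * Complex.I * k * x))
    (fun p _ => ‖c p‖) (fun p => Continuous.aestronglyMeasurable (by fun_prop))
    (fun p => .of_forall fun x _ => by rw [norm_mul, norm_exp_two_pi_I_int_mul, mul_one])
    (.of_forall fun _ _ => hc) intervalIntegrable_const
    (.of_forall fun x _ => by
      have h := (hh x).mul_right (Complex.exp (-2 * π * Complex.I * k * x))
      simp only [mul_assoc (c _), hexp] at h
      exact h)
  refine key.congr_fun fun p => ?_
  rw [intervalIntegral.integral_const_mul, integral_exp_two_pi_I_int_mul]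
  simp [sub_eq_zero]

lemma hasSum_mul_of_summable_norm {ι κ : Type*} {u : ι → ℂ} {v : κ → ℂ} {a b : ℂ}
    (hu : Summable fun k => ‖u k‖) (hv : Summable fun k => ‖v k‖) (ha : HasSum u a)
    (hb : HasSum v b) : HasSum (fun p : ι × κ => u p.1 * v p.2) (a * b) :=
  ha.mul hb (summable_mul_of_summable_norm hu hv)

/-- The product of two absolutely convergent trigonometric series, at two points. -/
lemma hasSum_mul_exp {f g : ℝ → ℝ} {c d : ℤ → ℂ} (hc : Summable fun k => ‖c k‖)
    (hd : Summable fun k => ‖d k‖)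
    (hf : ∀ x : ℝ, HasSum (fun k : ℤ => c k * Complex.exp (2 * π * Complex.I * k * x)) (f x))
    (hg : ∀ x : ℝ, HasSum (fun k : ℤ => d k * Complex.exp (2 * π * Complex.I * k * x)) (g x))
    (y z : ℝ) : HasSum (fun p : ℤ × ℤ => c p.1 * d p.2 *
      (Complex.exp (2 * π * Complex.I * p.1 * y) * Complex.exp (2 * π * Complex.I * p.2 * z)))
      ((f y * g z : ℝ) : ℂ) := by
  have hc' : Summable fun k : ℤ => ‖c k * Complex.exp (2 * π * Complex.I * k * y)‖ := by
    simpa only [norm_mul, norm_exp_two_pi_I_int_mul, mul_one] using hc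
  have hd' : Summable fun k : ℤ => ‖d k * Complex.exp (2 * π * Complex.I * k * z)‖ := by
    simpa only [norm_mul, norm_exp_two_pi_I_int_mul, mul_one] using hd
  rw [Complex.ofReal_mul]
  exact (hasSum_mul_of_summable_norm hc' hd' (hf y) (hg z)).congr_fun
    fun p => mul_mul_mul_comm _ _ _ _

lemma exp_mul_exp_sub_exp_mul_exp_neg (j l : ℤ) (s₁ s₂ x w : ℝ) :
    Complex.exp (2 * π * Complex.I * j * (x + s₁ * w : ℝ)) *
        Complex.exp (2 * π * Complex.I * l * (x + s₂ * w : ℝ)) -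
      Complex.exp (2 * π * Complex.I * j * (x + s₁ * -w : ℝ)) *
        Complex.exp (2 * π * Complex.I * l * (x + s₂ * -w : ℝ)) =
      2 * Complex.I * (Real.sin (2 * π * (j * s₁ + l * s₂) * w) : ℝ) *
        Complex.exp (2 * π * Complex.I * (j + l : ℤ) * x) := by
  have hsin := Complex.two_sin ((2 * π * (j * s₁ + l * s₂) * w : ℝ) : ℂ)
  have hI : 2 * Complex.I * (Real.sin (2 * π * (j * s₁ + l * s₂) * w) : ℝ) =
      Complex.exp (2 * π * Complex.I * (j * s₁ + l * s₂) * w) -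
        Complex.exp (-(2 * π * Complex.I * (j * s₁ + l * s₂) * w)) := by
    rw [Complex.ofReal_sin, mul_right_comm, hsin, mul_assoc, Complex.I_mul_I]
    push_cast
    ring_nf
  rw [hI, sub_mul, ← Complex.exp_add, ← Complex.exp_add, ← Complex.exp_add, ← Complex.exp_add]
  push_cast
  ring_nf

/-- Fourier expansion of the truncated bilinear Hilbert transform. -/
lemma hasSum_bilinearHilbert {ε : ℝ} (hε : 0 < ε) (hε' : ε ≤ 1 / 2) (s₁ s₂ : ℝ) {f g : ℝ → ℝ}
    {c d : ℤ → ℂ} (hc : Summable fun k => ‖c k‖) (hd : Summable fun k => ‖d k‖)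
    (hf : ∀ x : ℝ, HasSum (fun k : ℤ => c k * Complex.exp (2 * π * Complex.I * k * x)) (f x))
    (hg : ∀ x : ℝ, HasSum (fun k : ℤ => d k * Complex.exp (2 * π * Complex.I * k * x)) (g x))
    (hfc : Continuous f) (hgc : Continuous g) (x : ℝ) :
    HasSum (fun p : ℤ × ℤ => c p.1 * d p.2 *
        (2 * Complex.I * (∫ w in ε..(1 / 2 : ℝ),
          Real.sin (2 * π * (p.1 * s₁ + p.2 * s₂) * w) / w : ℝ)) *
        Complex.exp (2 * π * Complex.I * (p.1 + p.2 : ℤ) * x))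
      (((∫ w in ε..(1/2:ℝ), f (x + s₁*w) * g (x + s₂*w) / w) +
        ∫ w in (-(1/2):ℝ)..(-ε), f (x + s₁*w) * g (x + s₂*w) / w : ℝ) : ℂ) := by
  have hpos : ∀ {w : ℝ}, w ∈ Set.uIcc ε (1 / 2) → 0 < w := fun hw => by
    rw [Set.uIcc_of_le hε'] at hw; linarith [hw.1]
  have hcont : ∀ {u : ℝ → ℝ}, Continuous u → IntervalIntegrable (fun w => u w / w)
      MeasureTheory.volume ε (1 / 2) := fun hu =>
    (hu.continuousOn.div continuousOn_id fun w hw => (hpos hw).ne').intervalIntegrable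
  have hfold : (∫ w in ε..(1/2:ℝ), f (x + s₁*w) * g (x + s₂*w) / w) +
      ∫ w in (-(1/2):ℝ)..(-ε), f (x + s₁*w) * g (x + s₂*w) / w =
      ∫ w in ε..(1/2:ℝ),
        (f (x + s₁*w) * g (x + s₂*w) - f (x + s₁ * -w) * g (x + s₂ * -w)) / w := by
    rw [← intervalIntegral.integral_comp_neg]
    simp only [div_neg, sub_div]
    rw [intervalIntegral.integral_neg, intervalIntegral.integral_sub, sub_eq_add_neg]
    · exact hcont (by fun_prop)
    · exact hcont (by fun_prop)
  have hcd : Summable fun p : ℤ × ℤ => ‖c p.1‖ * ‖d p.2‖ :=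
    hc.mul_of_nonneg hd (fun _ => norm_nonneg _) (fun _ => norm_nonneg _)
  have key := intervalIntegral.hasSum_integral_of_dominated_convergence (a := ε) (b := 1 / 2)
    (μ := MeasureTheory.volume)
    (F := fun (p : ℤ × ℤ) (w : ℝ) => c p.1 * d p.2 *
      (2 * Complex.I * (Real.sin (2 * π * (p.1 * s₁ + p.2 * s₂) * w) / w : ℝ)) *
      Complex.exp (2 * π * Complex.I * (p.1 + p.2 : ℤ) * x))
    (f := fun w => (((f (x + s₁*w) * g (x + s₂*w) -
      f (x + s₁ * -w) * g (x + s₂ * -w)) / w : ℝ) : ℂ))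
    (fun p _ => ‖c p.1‖ * ‖d p.2‖ * (2 / ε))
    (fun p => Measurable.aestronglyMeasurable (by fun_prop))
    (fun p => .of_forall fun w hw => by
      rw [Set.uIoc_of_le hε'] at hw
      have hw0 : 0 < w := hε.trans hw.1
      rw [norm_mul, norm_exp_two_pi_I_int_mul, mul_one, norm_mul, norm_mul, norm_mul, norm_mul,
        Complex.norm_I, Complex.norm_ofNat, mul_one, Complex.norm_real, Real.norm_eq_abs, abs_div,
        abs_of_pos hw0, ← mul_div_assoc]
      gcongr
      · linarith [Real.abs_sin_le_one (2 * π * (p.1 * s₁ + p.2 * s₂) * w)]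
      · exact hw.1.le)
    (.of_forall fun _ _ => hcd.mul_right _) intervalIntegrable_const
    (.of_forall fun w _ => by
      have h := ((hasSum_mul_exp hc hd hf hg (x + s₁ * w) (x + s₂ * w)).sub
        (hasSum_mul_exp hc hd hf hg (x + s₁ * -w) (x + s₂ * -w))).mul_right ((w : ℂ)⁻¹)
      simp only [← mul_sub, exp_mul_exp_sub_exp_mul_exp_neg] at h
      rw [Complex.ofReal_div, Complex.ofReal_sub, div_eq_mul_inv]
      refine h.congr_fun fun p => ?_
      rw [Complex.ofReal_div]
      ring)
  rw [hfold, ← intervalIntegral.integral_ofReal]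
  refine key.congr_fun fun p => ?_
  rw [intervalIntegral.integral_mul_const, intervalIntegral.integral_const_mul,
    intervalIntegral.integral_const_mul, intervalIntegral.integral_ofReal]

open scoped ENNReal

/-- Weighted Cauchy–Schwarz inequality for series in `ℝ≥0∞`. -/
lemma ENNReal.tsum_sq_le_tsum_inv_mul_tsum {ι : Type*} (u x : ι → ℝ≥0∞) (hu : ∀ i, u i ≠ 0)
    (hu' : ∀ i, u i ≠ ∞) : (∑' i, x i) ^ 2 ≤ (∑' i, (u i)⁻¹) * ∑' i, u i * x i ^ 2 := by
  let _ : MeasurableSpace ι := ⊤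
  have h := ENNReal.lintegral_mul_le_Lp_mul_Lq (MeasureTheory.Measure.count : MeasureTheory.Measure ι)
    Real.HolderConjugate.two_two (f := fun i => (u i)⁻¹ ^ (1 / 2 : ℝ))
    (g := fun i => (u i * x i ^ 2) ^ (1 / 2 : ℝ)) measurable_from_top.aemeasurable
    measurable_from_top.aemeasurable
  have hsq : ∀ y : ℝ≥0∞, (y ^ (1 / 2 : ℝ)) ^ (2 : ℝ) = y := fun y => by
    rw [← ENNReal.rpow_mul]; norm_num
  have hmul : ∀ i, (u i)⁻¹ ^ (1 / 2 : ℝ) * (u i * x i ^ 2) ^ (1 / 2 : ℝ) = x i := fun i => by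
    rw [← ENNReal.mul_rpow_of_nonneg _ _ (by norm_num), ← mul_assoc,
      ENNReal.inv_mul_cancel (hu i) (hu' i), one_mul, ← ENNReal.rpow_natCast_mul]
    norm_num
  simp only [Pi.mul_apply, hmul, hsq, MeasureTheory.lintegral_count' measurable_from_top] at h
  calc _ ≤ ((∑' i, (u i)⁻¹) ^ (1 / 2 : ℝ) * (∑' i, u i * x i ^ 2) ^ (1 / 2 : ℝ)) ^ 2 := by gcongr
    _ = _ := by rw [mul_pow, ← ENNReal.rpow_two, ← ENNReal.rpow_two, hsq, hsq]

/-- A weighted `ℓ²` space on `ℤ` whose weight is quasi-subadditive with summable inverse is closed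
under convolution. -/
lemma ENNReal.tsum_mul_convolution_sq_le {w : ℤ → ℝ≥0∞} (hw : ∀ k, w k ≠ 0) (hw' : ∀ k, w k ≠ ∞)
    {D : ℝ≥0∞} (hD : ∀ j l, w (j + l) ≤ D * (w j + w l)) (a b : ℤ → ℝ≥0∞) :
    ∑' k, w k * (∑' j, a j * b (k - j)) ^ 2 ≤
      2 * D * (∑' k, (w k)⁻¹) * (∑' k, w k * a k ^ 2) * ∑' k, w k * b k ^ 2 := by
  have hshift : ∀ (v : ℤ → ℝ≥0∞) k, ∑' j, v (k - j) = ∑' j, v j := fun v k =>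
    (Equiv.subLeft k).tsum_eq v
  have hshift' : ∀ (v : ℤ → ℝ≥0∞) j, ∑' k, v (k - j) = ∑' k, v k := fun v j =>
    (Equiv.subRight j).tsum_eq v
  have hinv : ∀ k, w k * ∑' j, (w j * w (k - j))⁻¹ ≤ 2 * D * ∑' j, (w j)⁻¹ := fun k => by
    calc w k * ∑' j, (w j * w (k - j))⁻¹
        ≤ ∑' j, D * ((w j)⁻¹ + (w (k - j))⁻¹) := by
          rw [← ENNReal.tsum_mul_left]
          refine ENNReal.tsum_le_tsum fun j => ?_
          calc w k * (w j * w (k - j))⁻¹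
              ≤ D * (w j + w (k - j)) * (w j * w (k - j))⁻¹ := by
                gcongr
                simpa using hD j (k - j)
            _ = D * (w j * (w j)⁻¹ * (w (k - j))⁻¹ + w (k - j) * (w (k - j))⁻¹ * (w j)⁻¹) := by
                rw [ENNReal.mul_inv (.inl (hw _)) (.inl (hw' _))]
                ring
            _ = D * ((w j)⁻¹ + (w (k - j))⁻¹) := by
                rw [ENNReal.mul_inv_cancel (hw _) (hw' _), ENNReal.mul_inv_cancel (hw _) (hw' _),
                  one_mul, one_mul, add_comm]
      _ = 2 * D * ∑' j, (w j)⁻¹ := by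
          rw [ENNReal.tsum_mul_left, ENNReal.tsum_add, hshift fun j => (w j)⁻¹]
          ring
  calc ∑' k, w k * (∑' j, a j * b (k - j)) ^ 2
      ≤ ∑' k, 2 * D * (∑' j, (w j)⁻¹) *
          ∑' j, w j * w (k - j) * (a j * b (k - j)) ^ 2 := by
        refine ENNReal.tsum_le_tsum fun k => ?_
        calc _ ≤ w k * ((∑' j, (w j * w (k - j))⁻¹) *
              ∑' j, w j * w (k - j) * (a j * b (k - j)) ^ 2) := by
              gcongr
              exact ENNReal.tsum_sq_le_tsum_inv_mul_tsum _ _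
                (fun j => mul_ne_zero (hw _) (hw _)) (fun j => ENNReal.mul_ne_top (hw' _) (hw' _))
          _ ≤ _ := by
              rw [← mul_assoc]
              exact mul_le_mul_left (hinv k) _
    _ = 2 * D * (∑' j, (w j)⁻¹) * ∑' j, ∑' k, w j * a j ^ 2 * (w (k - j) * b (k - j) ^ 2) := by
        rw [ENNReal.tsum_mul_left, ENNReal.tsum_comm]
        congr! 5
        ring
    _ = _ := by
        simp only [ENNReal.tsum_mul_left, hshift' fun k => w k * b k ^ 2, ENNReal.tsum_mul_right]
        ring

lemma one_add_sq_rpow_add_le {m : ℝ} (hm : 0 ≤ m) (x y : ℝ) :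
    (1 + (x + y) ^ 2) ^ m ≤ 4 ^ m * ((1 + x ^ 2) ^ m + (1 + y ^ 2) ^ m) := by
  wlog h : y ^ 2 ≤ x ^ 2 generalizing x y
  · rw [add_comm x, add_comm ((1 + x ^ 2) ^ m)]
    exact this y x (le_of_not_ge h)
  calc (1 + (x + y) ^ 2) ^ m ≤ (4 * (1 + x ^ 2)) ^ m := by
        gcongr
        nlinarith [sq_nonneg (x - y)]
    _ = 4 ^ m * (1 + x ^ 2) ^ m := Real.mul_rpow (by norm_num) (by positivity)
    _ ≤ _ := by
        gcongr
        exact le_add_of_nonneg_right (by positivity)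

lemma sobNorm_eq_sqrt_toReal (m : ℝ) (h : ℝ → ℝ) :
    sobNorm m h = √(∑' k : ℤ, ENNReal.ofReal ((1 + (k : ℝ) ^ 2) ^ m) *
      ‖fourierCoeffR h k‖ₑ ^ 2).toReal := by
  rw [ENNReal.tsum_toReal_eq fun k => by finiteness]
  unfold sobNorm
  congr 2 with k
  rw [ENNReal.toReal_mul, ENNReal.toReal_pow, toReal_enorm, ENNReal.toReal_ofReal (by positivity)]

lemma tsum_sobolev_ne_top (m : ℝ) {f : ℝ → ℝ} (hp : Function.Periodic f 1)
    (hf : ContDiff ℝ (⊤ : ℕ∞) f) :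
    ∑' k : ℤ, ENNReal.ofReal ((1 + (k : ℝ) ^ 2) ^ m) * ‖fourierCoeffR f k‖ₑ ^ 2 ≠ ∞ := by
  convert (summable_sobolev_fourierCoeffR m hp hf).tsum_ofReal_ne_top using 3 with k
  rw [ENNReal.ofReal_mul (by positivity), ENNReal.ofReal_pow (by positivity), ofReal_norm]

lemma tsum_enorm_ite_add_eq (F : ℤ × ℤ → ℂ) (k : ℤ) :
    ∑' p : ℤ × ℤ, ‖if p.1 + p.2 = k then F p else 0‖ₑ = ∑' j, ‖F (j, k - j)‖ₑ := by
  refine (ENNReal.tsum_prod (f := fun j l : ℤ => ‖if j + l = k then F (j, l) else 0‖ₑ)).trans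
    (tsum_congr fun j => ?_)
  rw [tsum_eq_single (k - j) fun l hl => by rw [if_neg (by grind), enorm_zero],
    if_pos (by simp)]

lemma enorm_fourierCoeffR_bilinearHilbert_le {ε : ℝ} (hε : 0 < ε) (hε' : ε ≤ 1 / 2) (s₁ s₂ : ℝ)
    {f g : ℝ → ℝ} (hfp : Function.Periodic f 1) (hgp : Function.Periodic g 1)
    (hf : ContDiff ℝ (⊤ : ℕ∞) f) (hg : ContDiff ℝ (⊤ : ℕ∞) g) (k : ℤ) :
    ‖fourierCoeffR (fun x =>
        (∫ w in ε..(1/2:ℝ), f (x + s₁*w) * g (x + s₂*w) / w) +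
          ∫ w in (-(1/2):ℝ)..(-ε), f (x + s₁*w) * g (x + s₂*w) / w) k‖ₑ ≤
      6 * ∑' j, ‖fourierCoeffR f j‖ₑ * ‖fourierCoeffR g (k - j)‖ₑ := by
  have hc := summable_norm_fourierCoeffR hfp hf
  have hd := summable_norm_fourierCoeffR hgp hg
  have hcoeff : ∀ p : ℤ × ℤ, ‖fourierCoeffR f p.1 * fourierCoeffR g p.2 *
      (2 * Complex.I * (∫ w in ε..(1 / 2 : ℝ),
        Real.sin (2 * π * (p.1 * s₁ + p.2 * s₂) * w) / w : ℝ))‖ ≤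
      6 * (‖fourierCoeffR f p.1‖ * ‖fourierCoeffR g p.2‖) := fun p => by
    have h := abs_integral_sin_mul_div_le (2 * π * (p.1 * s₁ + p.2 * s₂)) hε hε'
    rw [norm_mul, norm_mul, norm_mul, norm_mul, Complex.norm_I, Complex.norm_ofNat, mul_one,
      Complex.norm_real, Real.norm_eq_abs, mul_comm]
    gcongr
    linarith
  have hcd : Summable fun p : ℤ × ℤ => ‖fourierCoeffR f p.1‖ * ‖fourierCoeffR g p.2‖ :=
    hc.mul_of_nonneg hd (fun _ => norm_nonneg _) fun _ => norm_nonneg _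
  have hsum := hasSum_fourierCoeffR_of_hasSum
    (.of_nonneg_of_le (fun _ => norm_nonneg _) hcoeff (hcd.mul_left 6))
    (hasSum_bilinearHilbert hε hε' s₁ s₂ hc hd (hasSum_fourierCoeffR hfp hf)
      (hasSum_fourierCoeffR hgp hg) hf.continuous hg.continuous) k
  rw [← hsum.tsum_eq]
  refine enorm_tsum_le_tsum_enorm.trans ?_
  rw [tsum_enorm_ite_add_eq, ← ENNReal.tsum_mul_left]
  refine ENNReal.tsum_le_tsum fun j => ?_
  have h := ENNReal.ofReal_le_ofReal (hcoeff (j, k - j))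
  rwa [ENNReal.ofReal_mul (by norm_num), ENNReal.ofReal_mul (norm_nonneg _), ofReal_norm,
    ofReal_norm, ofReal_norm, ENNReal.ofReal_ofNat] at h

/-- Uniform `Hᵐ`-bound for the truncated bilinear Hilbert transform, `m > 1/2`:
`‖H^ε_{s₁,s₂}(f,g)‖_{Hᵐ} ≤ C_H ‖f‖_{Hᵐ} ‖g‖_{Hᵐ}` with `C_H` independent of `ε, s₁, s₂`. -/
theorem stmt8 (m : ℝ) (hm : 1/2 < m) :
    ∃ C : ℝ, 0 < C ∧
      ∀ ε : ℝ, 0 < ε → ε ≤ 1/2 →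
        ∀ s₁ s₂ : ℝ, s₁ ∈ Set.Icc (0:ℝ) 1 → s₂ ∈ Set.Icc (0:ℝ) 1 →
          ∀ f g : ℝ → ℝ, Function.Periodic f 1 → Function.Periodic g 1 →
            ContDiff ℝ (⊤ : ℕ∞) f → ContDiff ℝ (⊤ : ℕ∞) g →
            sobNorm m (fun x =>
                (∫ w in ε..(1/2:ℝ), f (x + s₁*w) * g (x + s₂*w) / w) +
                  ∫ w in (-(1/2):ℝ)..(-ε), f (x + s₁*w) * g (x + s₂*w) / w) ≤
              C * sobNorm m f * sobNorm m g := by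
  set w : ℤ → ℝ≥0∞ := fun k => ENNReal.ofReal ((1 + (k : ℝ) ^ 2) ^ m) with hw
  have hw0 : ∀ k, w k ≠ 0 := fun k => by
    rw [hw]
    exact (ENNReal.ofReal_pos.2 (by positivity)).ne'
  have hwtop : ∀ k, w k ≠ ∞ := fun k => ENNReal.ofReal_ne_top
  have hadd : ∀ j l, w (j + l) ≤ ENNReal.ofReal (4 ^ m) * (w j + w l) := fun j l => by
    simp only [hw]
    rw [← ENNReal.ofReal_add (by positivity) (by positivity), ← ENNReal.ofReal_mul (by positivity)]
    push_cast
    exact ENNReal.ofReal_le_ofReal (one_add_sq_rpow_add_le (by linarith) _ _)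
  have hinv : ∑' k, (w k)⁻¹ ≠ ∞ := by
    convert (summable_one_add_sq_rpow_neg hm).tsum_ofReal_ne_top using 3 with k
    rw [Real.rpow_neg (by positivity), ENNReal.ofReal_inv_of_pos (by positivity)]
  set K : ℝ≥0∞ := 36 * (2 * ENNReal.ofReal (4 ^ m) * ∑' k, (w k)⁻¹) with hK
  have hKtop : K ≠ ∞ := by finiteness
  have hKpos : K ≠ 0 := by
    have h4 : ENNReal.ofReal (4 ^ m) ≠ 0 := (ENNReal.ofReal_pos.2 (by positivity)).ne'
    have hS : ∑' k, (w k)⁻¹ ≠ 0 := fun h =>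
      ENNReal.inv_ne_zero.2 (hwtop 0) (ENNReal.tsum_eq_zero.1 h 0)
    simp [hK, h4, hS]
  refine ⟨√K.toReal, Real.sqrt_pos.2 (ENNReal.toReal_pos hKpos hKtop), ?_⟩
  intro ε hε hε' s₁ s₂ _ _ f g hfp hgp hf hg
  rw [sobNorm_eq_sqrt_toReal, sobNorm_eq_sqrt_toReal, sobNorm_eq_sqrt_toReal,
    ← Real.sqrt_mul ENNReal.toReal_nonneg, ← Real.sqrt_mul (by positivity), ← ENNReal.toReal_mul,
    ← ENNReal.toReal_mul]
  refine Real.sqrt_le_sqrt (ENNReal.toReal_mono (ENNReal.mul_ne_top (ENNReal.mul_ne_top hKtop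
    (tsum_sobolev_ne_top m hfp hf)) (tsum_sobolev_ne_top m hgp hg)) ?_)
  calc _ ≤ ∑' k, w k *
        (6 * ∑' j, ‖fourierCoeffR f j‖ₑ * ‖fourierCoeffR g (k - j)‖ₑ) ^ 2 :=
        ENNReal.tsum_le_tsum fun k => by
          gcongr
          exact enorm_fourierCoeffR_bilinearHilbert_le hε hε' s₁ s₂ hfp hgp hf hg k
    _ = 36 * ∑' k, w k * (∑' j, ‖fourierCoeffR f j‖ₑ * ‖fourierCoeffR g (k - j)‖ₑ) ^ 2 := by
        rw [← ENNReal.tsum_mul_left]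
        congr! 2 with k
        ring
    _ ≤ _ := by
        rw [hK, mul_assoc 36, mul_assoc 36]
        gcongr
        exact ENNReal.tsum_mul_convolution_sq_le hw0 hwtop hadd _ _
end

section
/- Suppose γ ∈ C^∞(ℝ/ℤ, ℝ^n) is parametrized by arc-length and there exist constants M < ∞ and r > 0 such that the quantities a_l := ‖∂^{l+1}γ‖_{H¹} (l ∈ ℕ₀) satisfy a recursive bound a_{l+1} ≤ ã_{l+1} where (ã_l) are the Taylor coefficients at 0 of an analytic solution c of an analytic ODE c' = G(c), c(0) = a₀·(1,…,1), with |c^{(l)}(0)| ≤ M l!/r^l for all l. Then ‖∂^{l+1}γ‖_{H¹} ≤ M l!/r^l for all l ∈ ℕ₀ and consequently γ is real analytic on ℝ/ℤ. -/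
open scoped Nat

/-- The `H¹(ℝ/ℤ, ℝⁿ)` norm, modelled as `(∫₀¹ ‖f‖² + ∫₀¹ ‖f'‖²)^{1/2}`. -/
noncomputable def H1norm {n : ℕ} (f : ℝ → EuclideanSpace ℝ (Fin n)) : ℝ :=
  Real.sqrt ((∫ x in (0:ℝ)..1, ‖f x‖^2) + ∫ x in (0:ℝ)..1, ‖deriv f x‖^2)

open intervalIntegral in
/-- Sobolev embedding `H¹(ℝ/ℤ) ↪ L^∞`. -/
lemma Function.Periodic.norm_le_sqrt_two_mul_H1norm {n : ℕ} {f : ℝ → EuclideanSpace ℝ (Fin n)}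
    (hper : Function.Periodic f 1) (hf : ContDiff ℝ 1 f) (x : ℝ) :
    ‖f x‖ ≤ Real.sqrt 2 * H1norm f := by
  obtain ⟨z, hz, hxz⟩ := hper.exists_mem_Ico₀ zero_lt_one x
  rw [hxz]
  have hfc : Continuous f := hf.continuous
  have hdc : Continuous (deriv f) := hf.continuous_deriv le_rfl
  set S : ℝ := ∫ t in (0:ℝ)..1, (‖f t‖ ^ 2 + ‖deriv f t‖ ^ 2) with hS
  have hS_eq : S = (∫ t in (0:ℝ)..1, ‖f t‖ ^ 2) + ∫ t in (0:ℝ)..1, ‖deriv f t‖ ^ 2 :=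
    integral_add (Continuous.intervalIntegrable (by fun_prop) _ _)
      (Continuous.intervalIntegrable (by fun_prop) _ _)
  have hS_nonneg : 0 ≤ S := integral_nonneg zero_le_one fun t _ ↦ by positivity
  have hle : ∀ y ∈ Set.Icc (0:ℝ) 1, ‖f z‖ ^ 2 ≤ ‖f y‖ ^ 2 + S := by
    intro y hy
    have hftc : ∫ t in y..z, 2 * inner ℝ (f t) (deriv f t) = ‖f z‖ ^ 2 - ‖f y‖ ^ 2 :=
      integral_eq_sub_of_hasDerivAt
        (fun t _ ↦ ((hf.differentiable one_ne_zero) t).hasDerivAt.norm_sq)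
        (Continuous.intervalIntegrable (by fun_prop) _ _)
    have hbound : ‖∫ t in y..z, 2 * inner ℝ (f t) (deriv f t)‖
        ≤ |∫ t in y..z, (‖f t‖ ^ 2 + ‖deriv f t‖ ^ 2)| := by
      refine norm_integral_le_abs_of_norm_le (Filter.Eventually.of_forall fun t ↦ ?_)
        (Continuous.intervalIntegrable (by fun_prop) _ _)
      rw [norm_mul, Real.norm_eq_abs, Real.norm_eq_abs, abs_two]
      nlinarith [abs_real_inner_le_norm (f t) (deriv f t), sq_nonneg (‖f t‖ - ‖deriv f t‖)]
    have hmono : |∫ t in y..z, (‖f t‖ ^ 2 + ‖deriv f t‖ ^ 2)| ≤ |S| :=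
      abs_integral_mono_interval
        (by
          rw [Set.uIoc_of_le zero_le_one]
          exact Set.Ioc_subset_Ioc (le_min hy.1 hz.1) (max_le hy.2 hz.2.le))
        (Filter.Eventually.of_forall fun t ↦ by simp only [Pi.zero_apply]; positivity)
        (Continuous.intervalIntegrable (by fun_prop) _ _)
    rw [abs_of_nonneg hS_nonneg] at hmono
    rw [hftc, Real.norm_eq_abs] at hbound
    linarith [le_abs_self (‖f z‖ ^ 2 - ‖f y‖ ^ 2)]
  have hint : ‖f z‖ ^ 2 ≤ (∫ t in (0:ℝ)..1, ‖f t‖ ^ 2) + S := by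
    have := integral_mono_on (μ := MeasureTheory.volume) zero_le_one
      (Continuous.intervalIntegrable (by fun_prop) _ _)
      (Continuous.intervalIntegrable (by fun_prop) _ _) hle
    rw [integral_add (Continuous.intervalIntegrable (by fun_prop) _ _) (by simp)] at this
    simpa using this
  have hderiv_nonneg : 0 ≤ ∫ t in (0:ℝ)..1, ‖deriv f t‖ ^ 2 :=
    integral_nonneg zero_le_one fun t _ ↦ by positivity
  rw [H1norm, ← hS_eq, ← Real.sqrt_mul zero_le_two]
  exact Real.le_sqrt_of_sq_le (by linarith)

/-- A smooth function all of whose derivatives satisfy uniform bounds of factorial type is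
analytic. -/
theorem ContDiff.analyticOnNhd_of_norm_iteratedFDeriv_le {E F : Type*}
    [NormedAddCommGroup E] [NormedSpace ℝ E] [NormedAddCommGroup F] [NormedSpace ℝ F]
    [CompleteSpace F] {f : E → F} (hf : ContDiff ℝ (⊤ : ℕ∞) f) {C r : ℝ} (hr : 0 < r)
    (hbound : ∀ (n : ℕ) (x : E), ‖iteratedFDeriv ℝ n f x‖ ≤ C * (n ! : ℝ) / r ^ n) :
    AnalyticOnNhd ℝ f Set.univ := by
  intro x _
  let p : FormalMultilinearSeries ℝ E F := fun n ↦ (n ! : ℝ)⁻¹ • iteratedFDeriv ℝ n f x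
  refine HasFPowerSeriesOnBall.analyticAt (p := p) (r := (r.toNNReal : ENNReal)) ⟨?_, ?_, ?_⟩
  · refine p.le_radius_of_bound C fun n ↦ ?_
    rw [Real.coe_toNNReal _ hr.le, norm_smul, norm_inv, Real.norm_natCast]
    calc (n ! : ℝ)⁻¹ * ‖iteratedFDeriv ℝ n f x‖ * r ^ n
        ≤ (n ! : ℝ)⁻¹ * (C * (n ! : ℝ) / r ^ n) * r ^ n := by gcongr; exact hbound n x
      _ = C := by field_simp
  · simpa using hr
  · intro y hy
    have hyr : ‖y‖ < r := by
      rw [Metric.eball_coe, mem_ball_zero_iff, Real.coe_toNNReal _ hr.le] at hy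
      exact hy
    have hrem : ∀ n : ℕ, ‖(∑ k ∈ Finset.range (n + 1), p k fun _ ↦ y) - f (x + y)‖
        ≤ C * (((n + 1 : ℕ) : ℝ) * (‖y‖ / r) ^ (n + 1)) := by
      intro n
      rw [map_add_eq_sum_add_integral_iteratedFDeriv (n := n) fun t _ ↦
        hf.contDiffAt.of_le (by exact_mod_cast le_top), norm_sub_rev]
      simp only [p, smul_apply, add_sub_cancel_left]
      have hint : ‖∫ t in (0:ℝ)..1, (1 - t) ^ n • iteratedFDeriv ℝ (n + 1) f (x + t • y) fun _ ↦ y‖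
          ≤ C * ((n + 1)! : ℝ) / r ^ (n + 1) * ‖y‖ ^ (n + 1) * |1 - 0| := by
        refine intervalIntegral.norm_integral_le_of_norm_le_const fun t ht ↦ ?_
        rw [Set.uIoc_of_le zero_le_one] at ht
        have hpow : ‖(1 - t) ^ n‖ ≤ 1 := by
          rw [norm_pow]
          exact pow_le_one₀ (norm_nonneg _)
            (by rw [Real.norm_eq_abs, abs_le]; constructor <;> linarith [ht.1, ht.2])
        rw [norm_smul]
        refine (mul_le_of_le_one_left (norm_nonneg _) hpow).trans ?_
        refine (ContinuousMultilinearMap.le_opNorm _ _).trans ?_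
        rw [Finset.prod_const, Finset.card_univ, Fintype.card_fin]
        gcongr
        exact hbound (n + 1) _
      rw [norm_smul, norm_inv, Real.norm_natCast]
      refine (mul_le_mul_of_nonneg_left hint (by positivity)).trans_eq ?_
      rw [Nat.factorial_succ, div_pow]
      push_cast
      field_simp
      simp
    have hsum : Summable fun n ↦ p n fun _ ↦ y := by
      refine Summable.of_norm_bounded (g := fun n ↦ C * (‖y‖ / r) ^ n)
        ((summable_geometric_of_lt_one (by positivity) ((div_lt_one hr).2 hyr)).mul_left C)
        fun n ↦ ?_
      refine (ContinuousMultilinearMap.le_opNorm _ _).trans ?_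
      rw [Finset.prod_const, Finset.card_univ, Fintype.card_fin, norm_smul, norm_inv,
        Real.norm_natCast]
      calc (n ! : ℝ)⁻¹ * ‖iteratedFDeriv ℝ n f x‖ * ‖y‖ ^ n
          ≤ (n ! : ℝ)⁻¹ * (C * (n ! : ℝ) / r ^ n) * ‖y‖ ^ n := by gcongr; exact hbound n x
        _ = C * (‖y‖ / r) ^ n := by rw [div_pow]; field_simp
    refine hsum.hasSum_iff_tendsto_nat.2 ((Filter.tendsto_add_atTop_iff_nat 1).1 ?_)
    rw [tendsto_iff_norm_sub_tendsto_zero]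
    refine squeeze_zero (fun _ ↦ norm_nonneg _) hrem ?_
    have htend := (tendsto_self_mul_const_pow_of_lt_one (r := ‖y‖ / r) (by positivity)
      ((div_lt_one hr).2 hyr)).const_mul C
    rw [mul_zero] at htend
    exact htend.comp (Filter.tendsto_add_atTop_nat 1)

lemma Function.Periodic.iteratedDeriv {F : Type*} [NormedAddCommGroup F] [NormedSpace ℝ F]
    {f : ℝ → F} {c : ℝ} (hf : Function.Periodic f c) (k : ℕ) :
    Function.Periodic (iteratedDeriv k f) c := by
  intro x
  have h := congrFun (iteratedDeriv_comp_add_const k f c) x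
  rw [← h]
  exact congrArg (fun g ↦ _root_.iteratedDeriv k g x) (funext hf)

/-- Majorant argument: if the quantities `a_l = ‖∂^{l+1}γ‖_{H¹}` of a smooth, arc-length
parametrized periodic curve `γ` are dominated by the Taylor coefficients `ã_l` of an
analytic solution of an analytic ODE, which satisfy `ã_l ≤ M l!/r^l`, then
`‖∂^{l+1}γ‖_{H¹} ≤ M l!/r^l` for all `l`, and `γ` is real analytic. -/
theorem stmt19 {n : ℕ} (γ : ℝ → EuclideanSpace ℝ (Fin n))
    (hγ : ContDiff ℝ (⊤ : ℕ∞) γ) (hper : Function.Periodic γ 1)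
    (harc : ∀ x : ℝ, ‖deriv γ x‖ = 1)
    (M r : ℝ) (hM : 0 < M) (hr : 0 < r)
    (atil : ℕ → ℝ)
    (hmaj : ∀ l : ℕ, H1norm (iteratedDeriv (l + 1) γ) ≤ atil l)
    (hatil : ∀ l : ℕ, atil l ≤ M * (l ! : ℝ) / r ^ l) :
    (∀ l : ℕ, H1norm (iteratedDeriv (l + 1) γ) ≤ M * (l ! : ℝ) / r ^ l) ∧
    AnalyticOnNhd ℝ γ Set.univ := by
  have hH1 : ∀ l : ℕ, H1norm (iteratedDeriv (l + 1) γ) ≤ M * (l ! : ℝ) / r ^ l :=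
    fun l ↦ (hmaj l).trans (hatil l)
  refine ⟨hH1, ?_⟩
  have hsup (k : ℕ) (x : ℝ) : ‖iteratedDeriv k γ x‖ ≤ Real.sqrt 2 * H1norm (iteratedDeriv k γ) :=
    (hper.iteratedDeriv k).norm_le_sqrt_two_mul_H1norm
      (by
        rw [iteratedDeriv_eq_iterate]
        exact ContDiff.iterate_deriv' 1 k (hγ.of_le (by exact_mod_cast le_top))) x
  have hH1_nonneg : 0 ≤ H1norm γ := Real.sqrt_nonneg _
  refine hγ.analyticOnNhd_of_norm_iteratedFDeriv_le
    (C := Real.sqrt 2 * (H1norm γ + M * r)) hr fun k x ↦ ?_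
  rw [norm_iteratedFDeriv_eq_norm_iteratedDeriv]
  refine (hsup k x).trans ?_
  rw [mul_assoc, mul_div_assoc]
  refine mul_le_mul_of_nonneg_left ?_ (Real.sqrt_nonneg 2)
  cases k with
  | zero =>
    rw [iteratedDeriv_zero]
    simpa using (mul_pos hM hr).le
  | succ l =>
    calc H1norm (iteratedDeriv (l + 1) γ) ≤ M * (l ! : ℝ) / r ^ l := hH1 l
      _ = M * r * (l ! : ℝ) / r ^ (l + 1) := by rw [pow_succ]; field_simp
      _ ≤ (H1norm γ + M * r) * ((l + 1)! : ℝ) / r ^ (l + 1) := by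
        gcongr
        · exact le_add_of_nonneg_left hH1_nonneg
        · exact l.le_succ
end
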